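/- Let p, q be positive real numbers with 1/p + 1/q = 1. For all X, Y ∈ Mₙ(ℂ) there exists a unitary matrix U ∈ Mₙ(ℂ) such that |XY*| ≤ U (p⁻¹ |X|ᵖ + q⁻¹ |Y|^q) U* in the Löwner order. -/

import Mathlib

/-!
Ando's argument. By the Courant–Fischer principle it suffices to find, for each eigenvalue `l > 0`
of `|XYᴴ|` and the spectral subspace where `|XYᴴ| ≥ l`, an isometry `S` of that subspace into `ℂⁿ`
with `l ≤ Sᴴ(p⁻¹|X|ᵖ + q⁻¹|Y|^q)S`; the resulting inequalities between eigenvalues are realized by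
a unitary.

Let `p ≤ 2`. If `J` is the inclusion of the spectral subspace of `|YXᴴ|`, take `S` to be the
isometric polar factor of `T = XᴴJ`. Then `l² ≤ Tᴴ|Y|²T` becomes
`l²(TᴴT)⁻¹ ≤ Sᴴ|Y|²S ≤ (Sᴴ|Y|^qS)^(2/q)`, the second step being Hansen's form of Jensen's
operator inequality (here `q ≥ 2`), while `TTᴴ ≤ |X|²` and the operator monotonicity of `x^(p/2)`
give `(TᴴT)^(p/2) ≤ Sᴴ|X|ᵖS`. With `E = Sᴴ|Y|^qS`, inverting and raising to the power `p/2` turns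
the first chain into `lᵖE^(-p/q) ≤ (TᴴT)^(p/2)`, and the scalar inequality
`l ≤ p⁻¹lᵖx^(-p/q) + q⁻¹x`, applied to `E`, finishes. Here `|YXᴴ|` may replace `|XYᴴ|` because
`CᴴC` and `CCᴴ` have the same nonzero spectrum, and the case `q ≤ 2` follows by exchanging `X`
and `Y`.
-/

open scoped ComplexOrder
open Matrix

/-- The positive semidefinite square root of a positive semidefinite matrix
(the definition of the older Mathlib, which has since been removed). -/
noncomputable def Matrix.PosSemidef.sqrt {n : ℕ} {A : Matrix (Fin n) (Fin n) ℂ}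
    (hA : A.PosSemidef) : Matrix (Fin n) (Fin n) ℂ :=
  hA.1.eigenvectorUnitary.1 * diagonal ((↑) ∘ Real.sqrt ∘ hA.1.eigenvalues) *
    (star hA.1.eigenvectorUnitary : Matrix (Fin n) (Fin n) ℂ)

/-- The absolute value `|Z| = (Zᴴ Z)^(1/2)` of a square complex matrix. -/
noncomputable def matAbs {n : ℕ} (Z : Matrix (Fin n) (Fin n) ℂ) : Matrix (Fin n) (Fin n) ℂ :=
  (Matrix.posSemidef_conjTranspose_mul_self Z).sqrt

/-- Real powers of a positive semidefinite (in particular, Hermitian) matrix, obtained by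
applying `t ↦ t ^ r` to the eigenvalues; junk value `0` on non-Hermitian matrices. -/
noncomputable def matRpow {n : ℕ} (A : Matrix (Fin n) (Fin n) ℂ) (r : ℝ) :
    Matrix (Fin n) (Fin n) ℂ :=
  if hA : A.IsHermitian then hA.cfc (fun t => t ^ r) else 0

section LoewnerOrder

open scoped MatrixOrder Matrix.Norms.L2Operator

section CStarAlgebra

variable {A : Type*} [CStarAlgebra A] [PartialOrder A] [StarOrderedRing A] {a b : A} {c p q : ℝ}

lemma smul_rpow_eq (hc : 0 < c) (ha : IsStrictlyPositive a) (r : ℝ) :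
    (c • a) ^ r = c ^ r • a ^ r := by
  have hpos : ∀ x ∈ spectrum ℝ a, 0 < x := fun x hx => ha.spectrum_pos hx
  have hca : IsStrictlyPositive (c • a) := ha.smul hc
  have hcont : ContinuousOn (fun x : ℝ => x ^ r) (spectrum ℝ a) :=
    continuousOn_id.rpow_const fun x hx => .inl (hpos x hx).ne'
  have hcont' : ContinuousOn (fun x : ℝ => x ^ r) ((c • ·) '' spectrum ℝ a) :=
    continuousOn_id.rpow_const <| by
      rintro _ ⟨x, hx, rfl⟩
      exact .inl (mul_pos hc (hpos x hx)).ne'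
  calc (c • a) ^ r = cfc (fun x : ℝ => (c • x) ^ r) a := by
        rw [CFC.rpow_eq_cfc_real, cfc_comp_smul c (fun x : ℝ => x ^ r) a hcont']
    _ = cfc (fun x : ℝ => c ^ r * x ^ r) a :=
        cfc_congr fun x hx => Real.mul_rpow hc.le (hpos x hx).le
    _ = c ^ r • a ^ r := by rw [cfc_const_mul _ _ a, CFC.rpow_eq_cfc_real]

lemma smul_rpow_neg_le_rpow (ha : IsStrictlyPositive a) (hc : 0 < c)
    (h : c • a ^ (-1 : ℝ) ≤ b) {s : ℝ} (hs : s ∈ Set.Icc (0 : ℝ) 1) :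
    c ^ s • b ^ (-s) ≤ a ^ s := by
  have ha' : IsStrictlyPositive (a ^ (-1 : ℝ)) := IsStrictlyPositive.rpow a (-1)
  have hca : IsStrictlyPositive (c • a ^ (-1 : ℝ)) := ha'.smul hc
  have hb : IsStrictlyPositive b := hca.of_le h
  have hinv : c • b ^ (-1 : ℝ) ≤ a := calc
    c • b ^ (-1 : ℝ) ≤ c • (c • a ^ (-1 : ℝ)) ^ (-1 : ℝ) :=
      smul_le_smul_of_nonneg_left (CStarAlgebra.rpow_neg_one_le_rpow_neg_one h hca) hc.le
    _ = a := by
      rw [smul_rpow_eq hc ha', CFC.rpow_rpow a _ _ (by norm_num), smul_smul, Real.rpow_neg_one,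
        mul_inv_cancel₀ hc.ne', one_smul, neg_one_mul, neg_neg, CFC.rpow_one a]
  calc c ^ s • b ^ (-s) = (c • b ^ (-1 : ℝ)) ^ s := by
        rw [smul_rpow_eq hc (IsStrictlyPositive.rpow b (-1)), CFC.rpow_rpow b _ _ (by norm_num),
          neg_one_mul]
    _ ≤ a ^ s := CFC.rpow_le_rpow hs hinv

lemma le_young_rpow {l x : ℝ} (hpq : p.HolderConjugate q) (hl : 0 ≤ l) (hx : 0 < x) :
    l ≤ p⁻¹ * (l ^ p * x ^ (-(p / q))) + q⁻¹ * x := by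
  have hq := hpq.symm.pos.ne'
  calc l = l * x ^ (-q⁻¹) * x ^ q⁻¹ := by
        rw [mul_assoc, ← Real.rpow_add hx, neg_add_cancel, Real.rpow_zero, mul_one]
    _ ≤ (l * x ^ (-q⁻¹)) ^ p / p + (x ^ q⁻¹) ^ q / q :=
        Real.young_inequality_of_nonneg (by positivity) (by positivity) hpq
    _ = p⁻¹ * (l ^ p * x ^ (-(p / q))) + q⁻¹ * x := by
        rw [Real.mul_rpow hl (by positivity), ← Real.rpow_mul hx.le, ← Real.rpow_mul hx.le,
          inv_mul_cancel₀ hq, Real.rpow_one, neg_mul, inv_mul_eq_div]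
        ring

lemma algebraMap_le_young_rpow (hpq : p.HolderConjugate q) (hc : 0 ≤ c)
    (ha : IsStrictlyPositive a) :
    algebraMap ℝ A c ≤ p⁻¹ • c ^ p • a ^ (-(p / q)) + q⁻¹ • a := by
  have hpos : ∀ x ∈ spectrum ℝ a, 0 < x := fun x hx => ha.spectrum_pos hx
  have hcont : ContinuousOn (fun x : ℝ => x ^ (-(p / q))) (spectrum ℝ a) :=
    continuousOn_id.rpow_const fun x hx => .inl (hpos x hx).ne'
  calc algebraMap ℝ A c = cfc (fun _ : ℝ => c) a := (cfc_const c a).symm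
    _ ≤ cfc (fun x : ℝ => p⁻¹ * (c ^ p * x ^ (-(p / q))) + q⁻¹ * x) a :=
        cfc_mono fun x hx => le_young_rpow hpq hc (hpos x hx)
    _ = p⁻¹ • c ^ p • a ^ (-(p / q)) + q⁻¹ • a := by
        rw [cfc_add a (fun x : ℝ => p⁻¹ * (c ^ p * x ^ (-(p / q)))) (fun x => q⁻¹ * x),
          cfc_const_mul p⁻¹ _ a, cfc_const_mul (c ^ p) _ a,
          cfc_const_mul q⁻¹ _ a, cfc_id' ℝ a, ← CFC.rpow_eq_cfc_real]

end CStarAlgebra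

section Intertwining

variable {m n R k 𝕜 : Type*} [Fintype m] [DecidableEq m] [Fintype n] [DecidableEq n]

lemma pow_mul_eq_mul_pow_of_mul_eq_mul [Semiring R] {M : Matrix n n R} {N : Matrix m m R}
    {S : Matrix n m R} (h : M * S = S * N) (i : ℕ) : M ^ i * S = S * N ^ i := by
  induction i with
  | zero => simp
  | succ i ih =>
    rw [pow_succ, Matrix.mul_assoc, h, ← Matrix.mul_assoc, ih, Matrix.mul_assoc, ← pow_succ]

lemma aeval_mul_eq_mul_aeval_of_mul_eq_mul [CommSemiring k] [Semiring R] [Algebra k R]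
    {M : Matrix n n R} {N : Matrix m m R} {S : Matrix n m R} (h : M * S = S * N)
    (P : Polynomial k) : Polynomial.aeval M P * S = S * Polynomial.aeval N P := by
  induction P using Polynomial.induction_on' with
  | add P Q hP hQ => simp only [map_add, Matrix.add_mul, Matrix.mul_add, hP, hQ]
  | monomial i a =>
    simp only [Polynomial.aeval_monomial, Algebra.algebraMap_eq_smul_one, smul_mul_assoc, one_mul,
      Matrix.smul_mul, Matrix.mul_smul, pow_mul_eq_mul_pow_of_mul_eq_mul h]

lemma cfc_mul_eq_mul_cfc_of_mul_eq_mul [RCLike 𝕜] {M : Matrix n n 𝕜} {N : Matrix m m 𝕜}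
    (hM : M.IsHermitian) (hN : N.IsHermitian) {S : Matrix n m 𝕜} (h : M * S = S * N)
    (f : ℝ → ℝ) : cfc f M * S = S * cfc f N := by
  have hfin : (spectrum ℝ M ∪ spectrum ℝ N).Finite :=
    Matrix.finite_real_spectrum.union Matrix.finite_real_spectrum
  obtain ⟨P, hP⟩ : ∃ P : Polynomial ℝ, ∀ x ∈ spectrum ℝ M ∪ spectrum ℝ N, f x = P.eval x :=
    ⟨Lagrange.interpolate hfin.toFinset id f, fun x hx =>
      (Lagrange.eval_interpolate_at_node f Function.injective_id.injOn
        (hfin.mem_toFinset.2 hx)).symm⟩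
  have hfM : cfc f M = Polynomial.aeval M P := by
    rw [← cfc_polynomial P M hM.isSelfAdjoint]
    exact cfc_congr fun x hx => hP x (.inl hx)
  have hfN : cfc f N = Polynomial.aeval N P := by
    rw [← cfc_polynomial P N hN.isSelfAdjoint]
    exact cfc_congr fun x hx => hP x (.inr hx)
  rw [hfM, hfN, aeval_mul_eq_mul_aeval_of_mul_eq_mul h]

end Intertwining

section Jensen

variable {m n 𝕜 : Type*} [Fintype n] [RCLike 𝕜]

lemma conjTranspose_mul_mul_mono [Finite m] {a b : Matrix n n 𝕜} (hab : a ≤ b) (S : Matrix n m 𝕜) :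
    Sᴴ * a * S ≤ Sᴴ * b * S := by
  rw [Matrix.le_iff] at hab ⊢
  simpa only [Matrix.mul_sub, Matrix.sub_mul] using hab.conjTranspose_mul_mul_same S

lemma conjTranspose_mul_mul_nonneg [Finite m] {a : Matrix n n 𝕜} (ha : 0 ≤ a) (S : Matrix n m 𝕜) :
    0 ≤ Sᴴ * a * S := by
  simpa only [Matrix.mul_zero, Matrix.zero_mul] using conjTranspose_mul_mul_mono ha S

variable [Fintype m] [DecidableEq n]

/-- The reflection `2SSᴴ - 1` in the range of an isometry `S`, used to compress a matrix to
that range by averaging. -/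
def rangeReflection (S : Matrix n m 𝕜) : Matrix n n 𝕜 := 2 • (S * Sᴴ) - 1

omit [Fintype n] in
lemma conjTranspose_rangeReflection (S : Matrix n m 𝕜) :
    (rangeReflection S)ᴴ = rangeReflection S := by
  simp [rangeReflection, two_smul]

variable [DecidableEq m] {S : Matrix n m 𝕜}

lemma mul_conjTranspose_le_one (hS : Sᴴ * S = 1) : S * Sᴴ ≤ 1 := by
  have hproj : S * Sᴴ * (S * Sᴴ) = S * Sᴴ := by
    rw [Matrix.mul_assoc, ← Matrix.mul_assoc Sᴴ, hS, Matrix.one_mul]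
  have hsq : 1 - S * Sᴴ = (1 - S * Sᴴ)ᴴ * (1 - S * Sᴴ) := by
    simp [Matrix.sub_mul, Matrix.mul_sub, hproj]
  rw [Matrix.le_iff, hsq]
  exact posSemidef_conjTranspose_mul_self _

lemma rangeReflection_mul (hS : Sᴴ * S = 1) : rangeReflection S * S = S := by
  rw [rangeReflection, Matrix.sub_mul, Matrix.smul_mul, Matrix.mul_assoc, hS, Matrix.mul_one,
    Matrix.one_mul, two_smul, add_sub_cancel_right]

lemma conjTranspose_mul_rangeReflection (hS : Sᴴ * S = 1) : Sᴴ * rangeReflection S = Sᴴ := by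
  simpa only [conjTranspose_mul, conjTranspose_rangeReflection] using
    congrArg conjTranspose (rangeReflection_mul hS)

lemma rangeReflection_mul_self (hS : Sᴴ * S = 1) :
    rangeReflection S * rangeReflection S = 1 := by
  rw [rangeReflection.eq_1, Matrix.mul_sub, Matrix.mul_one, ← rangeReflection.eq_1,
    Matrix.mul_smul, ← Matrix.mul_assoc, rangeReflection_mul hS, rangeReflection, sub_sub_cancel]

lemma average_rangeReflection_mul (hS : Sᴴ * S = 1) (D : Matrix n n 𝕜) :
    ((1 / 2 : ℝ) • D + (1 / 2 : ℝ) • (rangeReflection S * D * rangeReflection S)) * S =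
      S * (Sᴴ * D * S) := by
  have hrefl : rangeReflection S * D * rangeReflection S * S =
      (2 : ℝ) • (S * (Sᴴ * D * S)) - D * S := by
    rw [Matrix.mul_assoc _ _ S, rangeReflection_mul hS, Matrix.mul_assoc, rangeReflection,
      Matrix.sub_mul, Matrix.one_mul, Matrix.smul_mul, two_smul, two_smul]
    simp only [Matrix.mul_assoc]
  rw [← smul_add, Matrix.smul_mul, Matrix.add_mul, hrefl, add_sub_cancel, smul_smul]
  norm_num

-- Averaging `D` with its conjugate by the reflection in the range of `S` gives a matrix that `S`
-- intertwines with the compression `SᴴDS`.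
theorem conjTranspose_mul_cfc_mul_le_cfc {f : ℝ → ℝ}
    (hf : ConcaveOn ℝ (Set.Ici 0) (fun D : Matrix n n 𝕜 => cfc f D)) {D : Matrix n n 𝕜}
    (hD : 0 ≤ D) (hS : Sᴴ * S = 1) : Sᴴ * cfc f D * S ≤ cfc f (Sᴴ * D * S) := by
  set u := rangeReflection S with hu
  have huS : u * S = S := rangeReflection_mul hS
  have hSu : Sᴴ * u = Sᴴ := conjTranspose_mul_rangeReflection hS
  have hD' : 0 ≤ u * D * u := by
    simpa only [hu, conjTranspose_rangeReflection] using conjTranspose_mul_mul_nonneg hD u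
  have hDavg : 0 ≤ (1 / 2 : ℝ) • D + (1 / 2 : ℝ) • (u * D * u) :=
    add_nonneg (smul_nonneg (by norm_num) hD) (smul_nonneg (by norm_num) hD')
  have hcompr : Sᴴ * cfc f (u * D * u) * S = Sᴴ * cfc f D * S := by
    have hcomm : cfc f (u * D * u) * u = u * cfc f D :=
      cfc_mul_eq_mul_cfc_of_mul_eq_mul hD'.posSemidef.1 hD.posSemidef.1
        (by rw [Matrix.mul_assoc, rangeReflection_mul_self hS, Matrix.mul_one]) f
    calc Sᴴ * cfc f (u * D * u) * S = Sᴴ * (cfc f (u * D * u) * u) * S := by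
          simp only [Matrix.mul_assoc, huS]
      _ = Sᴴ * cfc f D * S := by rw [hcomm, ← Matrix.mul_assoc, hSu]
  calc Sᴴ * cfc f D * S
      = Sᴴ * ((1 / 2 : ℝ) • cfc f D + (1 / 2 : ℝ) • cfc f (u * D * u)) * S := by
        rw [← smul_add, Matrix.mul_smul, Matrix.smul_mul, Matrix.mul_add, Matrix.add_mul, hcompr,
          ← two_smul ℝ, smul_smul]
        norm_num
    _ ≤ Sᴴ * cfc f ((1 / 2 : ℝ) • D + (1 / 2 : ℝ) • (u * D * u)) * S :=
        conjTranspose_mul_mul_mono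
          (hf.2 hD hD' (by norm_num) (by norm_num) (by norm_num)) S
    _ = cfc f (Sᴴ * D * S) := by
        rw [Matrix.mul_assoc, cfc_mul_eq_mul_cfc_of_mul_eq_mul hDavg.posSemidef.1
          (conjTranspose_mul_mul_nonneg hD S).posSemidef.1 (average_rangeReflection_mul hS D),
          ← Matrix.mul_assoc, hS, Matrix.one_mul]

theorem conjTranspose_mul_rpow_mul_le_rpow {m n : Type*} [Fintype m] [DecidableEq m] [Fintype n]
    [DecidableEq n] {S : Matrix n m ℂ} (hS : Sᴴ * S = 1) {D : Matrix n n ℂ} (hD : 0 ≤ D)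
    {s : ℝ} (hs : s ∈ Set.Icc (0 : ℝ) 1) : Sᴴ * D ^ s * S ≤ (Sᴴ * D * S) ^ s := by
  have hf : ConcaveOn ℝ (Set.Ici 0) fun D : Matrix n n ℂ => cfc (fun x : ℝ => x ^ s) D :=
    (CFC.concaveOn_rpow hs).congr fun D hD => CFC.rpow_eq_cfc_real hD
  rw [CFC.rpow_eq_cfc_real hD, CFC.rpow_eq_cfc_real (conjTranspose_mul_mul_nonneg hD S)]
  exact conjTranspose_mul_cfc_mul_le_cfc hf hD hS

end Jensen

section Polar

variable {a m : Type*} [Fintype a] [Fintype m] [DecidableEq m]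

/-- The factor `V = T(TᴴT)^(-1/2)` of the polar decomposition `T = V|T|`; it is an isometry if
`TᴴT` is invertible. -/
noncomputable def polarIsometry (T : Matrix a m ℂ) : Matrix a m ℂ :=
  T * (Tᴴ * T) ^ (-(1 / 2) : ℝ)

lemma conjTranspose_polarIsometry (T : Matrix a m ℂ) :
    (polarIsometry T)ᴴ = (Tᴴ * T) ^ (-(1 / 2) : ℝ) * Tᴴ := by
  have hsa : ((Tᴴ * T) ^ (-(1 / 2) : ℝ))ᴴ = (Tᴴ * T) ^ (-(1 / 2) : ℝ) :=
    CFC.rpow_nonneg.posSemidef.1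
  rw [polarIsometry, conjTranspose_mul, hsa]

lemma conjTranspose_polarIsometry_mul_mul (T : Matrix a m ℂ) (Q : Matrix a a ℂ) :
    (polarIsometry T)ᴴ * Q * polarIsometry T =
      (Tᴴ * T) ^ (-(1 / 2) : ℝ) * (Tᴴ * Q * T) * (Tᴴ * T) ^ (-(1 / 2) : ℝ) := by
  rw [conjTranspose_polarIsometry, polarIsometry]
  simp only [Matrix.mul_assoc]

variable {T : Matrix a m ℂ}

lemma conjTranspose_polarIsometry_mul_self (hT : IsStrictlyPositive (Tᴴ * T)) :
    (polarIsometry T)ᴴ * polarIsometry T = 1 := by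
  rw [conjTranspose_polarIsometry, polarIsometry, Matrix.mul_assoc, ← Matrix.mul_assoc Tᴴ,
    ← Matrix.mul_assoc]
  exact CFC.conjugate_rpow_neg_one_half (Tᴴ * T)

lemma mul_conjTranspose_mul_polarIsometry (hT : IsStrictlyPositive (Tᴴ * T)) :
    T * Tᴴ * polarIsometry T = polarIsometry T * (Tᴴ * T) := by
  have hcomm : Tᴴ * T * (Tᴴ * T) ^ (-(1 / 2) : ℝ) = (Tᴴ * T) ^ (-(1 / 2) : ℝ) * (Tᴴ * T) := by
    conv_lhs => enter [1]; rw [← CFC.rpow_one (Tᴴ * T)]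
    conv_rhs => enter [2]; rw [← CFC.rpow_one (Tᴴ * T)]
    rw [← CFC.rpow_add hT.isUnit, ← CFC.rpow_add hT.isUnit, add_comm]
  rw [polarIsometry, Matrix.mul_assoc T, ← Matrix.mul_assoc Tᴴ, hcomm, Matrix.mul_assoc]

lemma smul_rpow_neg_one_le_polarIsometry {Q : Matrix a a ℂ} {c : ℝ}
    (hT : IsStrictlyPositive (Tᴴ * T)) (h : c • (1 : Matrix m m ℂ) ≤ Tᴴ * Q * T) :
    c • (Tᴴ * T) ^ (-1 : ℝ) ≤ (polarIsometry T)ᴴ * Q * polarIsometry T := by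
  set R := (Tᴴ * T) ^ (-(1 / 2) : ℝ) with hR
  have hRR : R * R = (Tᴴ * T) ^ (-1 : ℝ) := by
    rw [hR, ← CFC.rpow_add hT.isUnit]; norm_num
  have hsa : Rᴴ = R := CFC.rpow_nonneg.posSemidef.1
  have hconj := conjTranspose_mul_mul_mono h R
  rwa [hsa, Matrix.mul_smul, Matrix.mul_one, Matrix.smul_mul, hRR,
    ← conjTranspose_polarIsometry_mul_mul] at hconj

lemma isStrictlyPositive_conjTranspose_mul_self {Q : Matrix a a ℂ}
    (h : IsStrictlyPositive (Tᴴ * Q * T)) : IsStrictlyPositive (Tᴴ * T) := by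
  rw [Matrix.isStrictlyPositive_iff_posDef] at h ⊢
  have hinj : Function.Injective (Tᴴ * Q * T).mulVec :=
    Matrix.mulVec_injective_iff_isUnit.2 h.isUnit
  refine PosDef.conjTranspose_mul_self T fun x y hxy => hinj ?_
  rw [← mulVec_mulVec, ← mulVec_mulVec, hxy, mulVec_mulVec, mulVec_mulVec]

lemma conjTranspose_polarIsometry_mul_rpow_mul [DecidableEq a]
    (hT : IsStrictlyPositive (Tᴴ * T)) (s : ℝ) :
    (polarIsometry T)ᴴ * (T * Tᴴ) ^ s * polarIsometry T = (Tᴴ * T) ^ s := by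
  have hTT := posSemidef_self_mul_conjTranspose T
  rw [CFC.rpow_eq_cfc_real hTT.nonneg, CFC.rpow_eq_cfc_real hT.nonneg, Matrix.mul_assoc,
    cfc_mul_eq_mul_cfc_of_mul_eq_mul hTT.1 hT.nonneg.posSemidef.1
      (mul_conjTranspose_mul_polarIsometry hT),
    ← Matrix.mul_assoc, conjTranspose_polarIsometry_mul_self hT, Matrix.one_mul]

theorem exists_isometry_smul_one_le_mul_conjTranspose {a b m : Type*} [Fintype a] [Fintype b]
    [Finite m] [DecidableEq m] {C : Matrix a b ℂ} {J : Matrix b m ℂ} (hJ : Jᴴ * J = 1) {c : ℝ}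
    (hc : 0 < c) (h : c • (1 : Matrix m m ℂ) ≤ Jᴴ * (Cᴴ * C) * J) :
    ∃ W : Matrix a m ℂ, Wᴴ * W = 1 ∧ c • (1 : Matrix m m ℂ) ≤ Wᴴ * (C * Cᴴ) * W := by
  classical
  have := Fintype.ofFinite m
  set T := C * J with hTdef
  have hT : Jᴴ * (Cᴴ * C) * J = Tᴴ * T := by
    simp only [hTdef, conjTranspose_mul, Matrix.mul_assoc]
  have hpos : IsStrictlyPositive (Tᴴ * T) :=
    (isStrictlyPositive_one.smul hc).of_le (h.trans_eq hT)
  have hle : T * Tᴴ ≤ C * Cᴴ := by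
    simpa only [hTdef, conjTranspose_mul, conjTranspose_conjTranspose, Matrix.mul_assoc,
      Matrix.one_mul] using conjTranspose_mul_mul_mono (mul_conjTranspose_le_one hJ) Cᴴ
  refine ⟨polarIsometry T, conjTranspose_polarIsometry_mul_self hpos, ?_⟩
  calc c • (1 : Matrix m m ℂ) ≤ Tᴴ * T := h.trans_eq hT
    _ = (polarIsometry T)ᴴ * (T * Tᴴ) * polarIsometry T := by
        simpa only [CFC.rpow_one _ hpos.nonneg,
          CFC.rpow_one _ (posSemidef_self_mul_conjTranspose T).nonneg] using
          (conjTranspose_polarIsometry_mul_rpow_mul hpos 1).symm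
    _ ≤ (polarIsometry T)ᴴ * (C * Cᴴ) * polarIsometry T := conjTranspose_mul_mul_mono hle _

end Polar

section Compression

variable {m n : Type*} [Fintype m] [DecidableEq m] [Fintype n] [DecidableEq n] {p q l : ℝ}

lemma holderConjugate_le_two_iff (hpq : p.HolderConjugate q) : p ≤ 2 ↔ 2 ≤ q := by
  have hinv := hpq.inv_add_inv_eq_one
  rw [← inv_le_inv₀ two_pos hpq.pos, ← inv_le_inv₀ hpq.symm.pos two_pos]
  constructor <;> intro h <;> linarith

lemma smul_one_le_young_compression (hpq : p.HolderConjugate q) (hp : p ≤ 2) (hl : 0 < l)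
    {G E : Matrix m m ℂ} (hG : IsStrictlyPositive G) (hE : 0 ≤ E)
    (h : l ^ 2 • G ^ (-1 : ℝ) ≤ E ^ (2 / q)) :
    l • (1 : Matrix m m ℂ) ≤ p⁻¹ • G ^ (p / 2) + q⁻¹ • E := by
  have hp0 : 0 < p := hpq.pos
  have hq0 : 0 < q := hpq.symm.pos
  have hl2 : 0 < l ^ 2 := by positivity
  have hEpos : IsStrictlyPositive E := by
    have hG' : IsStrictlyPositive (G ^ (-1 : ℝ)) := IsStrictlyPositive.rpow G (-1)
    have hEr : IsStrictlyPositive (E ^ (2 / q)) := (hG'.smul hl2).of_le h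
    exact IsStrictlyPositive.iff_of_unital.2
      ⟨hE, (CFC.isUnit_rpow_iff E (2 / q) (by positivity)).1 hEr.isUnit⟩
  have hle : l ^ p • E ^ (-(p / q)) ≤ G ^ (p / 2) := by
    have hs : p / 2 ∈ Set.Icc (0 : ℝ) 1 := ⟨by positivity, by linarith⟩
    have hlp : (l ^ 2) ^ (p / 2) = l ^ p := by
      rw [← Real.rpow_two, ← Real.rpow_mul hl.le, mul_div_cancel₀ _ two_ne_zero]
    have hEp : (E ^ (2 / q)) ^ (-(p / 2)) = E ^ (-(p / q)) := by
      rw [CFC.rpow_rpow E _ _ (by positivity)]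
      congr 1
      field_simp
    simpa only [hlp, hEp] using smul_rpow_neg_le_rpow hG hl2 h hs
  calc l • (1 : Matrix m m ℂ) = algebraMap ℝ _ l := (Algebra.algebraMap_eq_smul_one l).symm
    _ ≤ p⁻¹ • l ^ p • E ^ (-(p / q)) + q⁻¹ • E := algebraMap_le_young_rpow hpq hl.le hEpos
    _ ≤ p⁻¹ • G ^ (p / 2) + q⁻¹ • E := by gcongr

theorem exists_isometry_smul_one_le_young_of_le_two (hpq : p.HolderConjugate q) (hp : p ≤ 2)
    {T : Matrix n m ℂ} {P Q : Matrix n n ℂ} (hP : T * Tᴴ ≤ P) (hQ : 0 ≤ Q) (hl : 0 < l)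
    (h : l ^ 2 • (1 : Matrix m m ℂ) ≤ Tᴴ * Q * T) :
    ∃ S : Matrix n m ℂ, Sᴴ * S = 1 ∧
      l • (1 : Matrix m m ℂ) ≤ Sᴴ * (p⁻¹ • P ^ (p / 2) + q⁻¹ • Q ^ (q / 2)) * S := by
  have hp0 : 0 < p := hpq.pos
  have hq0 : 0 < q := hpq.symm.pos
  have hq : 2 ≤ q := (holderConjugate_le_two_iff hpq).1 hp
  have hT : IsStrictlyPositive (Tᴴ * T) := isStrictlyPositive_conjTranspose_mul_self
    ((isStrictlyPositive_one.smul (by positivity : 0 < l ^ 2)).of_le h)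
  set S := polarIsometry T
  have hS : Sᴴ * S = 1 := conjTranspose_polarIsometry_mul_self hT
  have hJensen : l ^ 2 • (Tᴴ * T) ^ (-1 : ℝ) ≤ (Sᴴ * Q ^ (q / 2) * S) ^ (2 / q) := calc
    l ^ 2 • (Tᴴ * T) ^ (-1 : ℝ) ≤ Sᴴ * Q * S := smul_rpow_neg_one_le_polarIsometry hT h
    _ = Sᴴ * (Q ^ (q / 2)) ^ (2 / q) * S := by
      rw [CFC.rpow_rpow_of_exponent_nonneg Q _ _ (by positivity) (by positivity),
        div_mul_div_cancel₀ two_ne_zero, div_self hq0.ne', CFC.rpow_one Q]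
    _ ≤ (Sᴴ * Q ^ (q / 2) * S) ^ (2 / q) :=
      conjTranspose_mul_rpow_mul_le_rpow hS CFC.rpow_nonneg
        ⟨by positivity, (div_le_one hq0).2 hq⟩
  have hmono : (Tᴴ * T) ^ (p / 2) ≤ Sᴴ * P ^ (p / 2) * S := by
    rw [← conjTranspose_polarIsometry_mul_rpow_mul hT]
    exact conjTranspose_mul_mul_mono
      (CFC.rpow_le_rpow ⟨by positivity, by linarith⟩ hP) S
  refine ⟨S, hS, ?_⟩
  calc l • (1 : Matrix m m ℂ)
      ≤ p⁻¹ • (Tᴴ * T) ^ (p / 2) + q⁻¹ • (Sᴴ * Q ^ (q / 2) * S) :=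
        smul_one_le_young_compression hpq hp hl hT
          (conjTranspose_mul_mul_nonneg CFC.rpow_nonneg S) hJensen
    _ ≤ p⁻¹ • (Sᴴ * P ^ (p / 2) * S) + q⁻¹ • (Sᴴ * Q ^ (q / 2) * S) := by gcongr
    _ = Sᴴ * (p⁻¹ • P ^ (p / 2) + q⁻¹ • Q ^ (q / 2)) * S := by
        simp only [Matrix.mul_add, Matrix.add_mul, Matrix.mul_smul, Matrix.smul_mul]

end Compression

section Gram

variable {a b m n : Type*} [Fintype a] [Fintype b] [Finite m] [DecidableEq m] [Fintype n]
  [DecidableEq n] {p q l : ℝ}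

lemma exists_isometry_smul_one_le_young_gram_of_le_two (hpq : p.HolderConjugate q) (hq : q ≤ 2)
    {X : Matrix a n ℂ} {Y : Matrix b n ℂ} {J : Matrix b m ℂ} (hJ : Jᴴ * J = 1) (hl : 0 < l)
    (h : l ^ 2 • (1 : Matrix m m ℂ) ≤ Jᴴ * ((X * Yᴴ)ᴴ * (X * Yᴴ)) * J) :
    ∃ S : Matrix n m ℂ, Sᴴ * S = 1 ∧
      l • (1 : Matrix m m ℂ) ≤ Sᴴ * (p⁻¹ • (Xᴴ * X) ^ (p / 2) + q⁻¹ • (Yᴴ * Y) ^ (q / 2)) * S := by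
  classical
  have := Fintype.ofFinite m
  have hle : (Yᴴ * J) * (Yᴴ * J)ᴴ ≤ Yᴴ * Y := by
    simpa only [conjTranspose_mul, conjTranspose_conjTranspose, Matrix.mul_assoc, Matrix.one_mul]
      using conjTranspose_mul_mul_mono (mul_conjTranspose_le_one hJ) Y
  have hXT : l ^ 2 • (1 : Matrix m m ℂ) ≤ (Yᴴ * J)ᴴ * (Xᴴ * X) * (Yᴴ * J) := by
    simpa only [conjTranspose_mul, conjTranspose_conjTranspose, Matrix.mul_assoc] using h
  simpa only [add_comm] using exists_isometry_smul_one_le_young_of_le_two hpq.symm hq hle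
    (posSemidef_conjTranspose_mul_self X).nonneg hl hXT

theorem exists_isometry_smul_one_le_young_gram (hpq : p.HolderConjugate q)
    {X : Matrix a n ℂ} {Y : Matrix b n ℂ} {J : Matrix b m ℂ} (hJ : Jᴴ * J = 1) (hl : 0 < l)
    (h : l ^ 2 • (1 : Matrix m m ℂ) ≤ Jᴴ * ((X * Yᴴ)ᴴ * (X * Yᴴ)) * J) :
    ∃ S : Matrix n m ℂ, Sᴴ * S = 1 ∧
      l • (1 : Matrix m m ℂ) ≤ Sᴴ * (p⁻¹ • (Xᴴ * X) ^ (p / 2) + q⁻¹ • (Yᴴ * Y) ^ (q / 2)) * S := by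
  rcases le_total q 2 with hq | hq
  · exact exists_isometry_smul_one_le_young_gram_of_le_two hpq hq hJ hl h
  · obtain ⟨W, hW, hWle⟩ := exists_isometry_smul_one_le_mul_conjTranspose hJ (by positivity) h
    have hYX : X * Yᴴ * (X * Yᴴ)ᴴ = (Y * Xᴴ)ᴴ * (Y * Xᴴ) := by
      simp only [conjTranspose_mul, conjTranspose_conjTranspose, Matrix.mul_assoc]
    rw [hYX] at hWle
    simpa only [add_comm] using exists_isometry_smul_one_le_young_gram_of_le_two hpq.symm
      ((holderConjugate_le_two_iff hpq).2 hq) hW hl hWle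

end Gram

section Eigenvalues

variable {m n 𝕜 : Type*} [Fintype m] [Fintype n] [DecidableEq n] [RCLike 𝕜]

lemma dotProduct_conjTranspose_diagonal_mulVec (C : Matrix n m 𝕜) (d : n → ℝ) (y : m → 𝕜) :
    star y ⬝ᵥ (Cᴴ * diagonal (fun j => (d j : 𝕜)) * C) *ᵥ y =
      ((∑ j, d j * ‖(C *ᵥ y) j‖ ^ 2 : ℝ) : 𝕜) := by
  rw [Matrix.mul_assoc, ← mulVec_mulVec, dotProduct_mulVec, vecMul_conjTranspose, star_star,
    ← mulVec_mulVec, dotProduct]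
  push_cast
  refine Finset.sum_congr rfl fun j _ => ?_
  rw [mulVec_diagonal, Pi.star_apply, ← RCLike.conj_mul, RCLike.star_def]
  ring

variable [DecidableEq m]

lemma eq_zero_of_smul_one_le_conjTranspose_diagonal_mul {C : Matrix n m 𝕜} (hC : Cᴴ * C = 1)
    {d : n → ℝ} {l : ℝ} (h : l • (1 : Matrix m m 𝕜) ≤ Cᴴ * diagonal (fun j => (d j : 𝕜)) * C)
    {y : m → 𝕜} (hy : ∀ j, l ≤ d j → (C *ᵥ y) j = 0) : y = 0 := by
  have hdiff : Cᴴ * diagonal (fun j => (d j : 𝕜)) * C - l • (1 : Matrix m m 𝕜) =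
      Cᴴ * diagonal (fun j => ((d j - l : ℝ) : 𝕜)) * C := by
    have hdiag : diagonal (fun j => ((d j - l : ℝ) : 𝕜)) =
        diagonal (fun j => (d j : 𝕜)) - l • (1 : Matrix n n 𝕜) := by
      ext i j
      rcases eq_or_ne i j with rfl | hij <;> simp [*, RCLike.real_smul_eq_coe_mul]
    rw [hdiag, Matrix.mul_sub, Matrix.sub_mul, Matrix.mul_smul, Matrix.smul_mul, Matrix.mul_one, hC]
  have hsum : 0 ≤ ∑ j, (d j - l) * ‖(C *ᵥ y) j‖ ^ 2 := by
    rw [Matrix.le_iff, hdiff] at h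
    have hquad := h.dotProduct_mulVec_nonneg y
    rw [dotProduct_conjTranspose_diagonal_mulVec] at hquad
    exact RCLike.ofReal_nonneg.1 hquad
  have hterm : ∀ j ∈ Finset.univ, (d j - l) * ‖(C *ᵥ y) j‖ ^ 2 ≤ 0 := fun j _ => by
    rcases le_or_gt l (d j) with hj | hj
    · simp [hy j hj]
    · exact mul_nonpos_of_nonpos_of_nonneg (by linarith) (by positivity)
  have hzero := (Finset.sum_eq_zero_iff_of_nonpos hterm).1
    (le_antisymm (Finset.sum_nonpos hterm) hsum)
  have hCy : C *ᵥ y = 0 := by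
    ext j
    rcases le_or_gt l (d j) with hj | hj
    · exact hy j hj
    · simpa [(sub_neg.2 hj).ne] using hzero j (Finset.mem_univ j)
  rw [← one_mulVec y, ← hC, ← mulVec_mulVec, hCy, mulVec_zero]

variable {H P Q : Matrix n n 𝕜}

lemma conjTranspose_eigenvectorUnitary_mul_mul (hH : H.IsHermitian) :
    (hH.eigenvectorUnitary : Matrix n n 𝕜)ᴴ * H * hH.eigenvectorUnitary =
      diagonal (fun j => (hH.eigenvalues j : 𝕜)) := by
  rw [← star_eq_conjTranspose, ← Unitary.conjStarAlgAut_star_apply (S := 𝕜)]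
  exact hH.conjStarAlgAut_star_eigenvectorUnitary

theorem card_le_card_le_eigenvalues (hH : H.IsHermitian) {S : Matrix n m 𝕜} (hS : Sᴴ * S = 1)
    {l : ℝ} (h : l • (1 : Matrix m m 𝕜) ≤ Sᴴ * H * S) :
    Fintype.card m ≤ Fintype.card {j // l ≤ hH.eigenvalues j} := by
  set V := (hH.eigenvectorUnitary : Matrix n n 𝕜)
  have hVV : V * Vᴴ = 1 := Unitary.coe_mul_star_self _
  have hC : (Vᴴ * S)ᴴ * (Vᴴ * S) = 1 := by
    rw [conjTranspose_mul, conjTranspose_conjTranspose, Matrix.mul_assoc, ← Matrix.mul_assoc V,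
      hVV, Matrix.one_mul, hS]
  have hdiag : Sᴴ * H * S =
      (Vᴴ * S)ᴴ * diagonal (fun j => (hH.eigenvalues j : 𝕜)) * (Vᴴ * S) := calc
    Sᴴ * H * S = Sᴴ * (V * Vᴴ) * H * (V * Vᴴ) * S := by rw [hVV, Matrix.mul_one, Matrix.mul_one]
    _ = (Vᴴ * S)ᴴ * (Vᴴ * H * V) * (Vᴴ * S) := by
      simp only [conjTranspose_mul, conjTranspose_conjTranspose, Matrix.mul_assoc]
    _ = _ := by rw [conjTranspose_eigenvectorUnitary_mul_mul hH]
  rw [hdiag] at h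
  let R : Matrix {j // l ≤ hH.eigenvalues j} m 𝕜 := (Vᴴ * S).submatrix Subtype.val id
  have hR : Function.Injective R.mulVecLin := LinearMap.ker_eq_bot.1 <| LinearMap.ker_eq_bot'.2
    fun y hy => eq_zero_of_smul_one_le_conjTranspose_diagonal_mul hC h
      fun j hj => congrFun hy ⟨j, hj⟩
  simpa only [Module.finrank_fintype_fun_eq_card] using
    LinearMap.finrank_le_finrank_of_injective hR

lemma exists_isometry_smul_one_le (hH : H.IsHermitian) (l : ℝ) :
    ∃ J : Matrix n {j // l ≤ hH.eigenvalues j} 𝕜, Jᴴ * J = 1 ∧ l • 1 ≤ Jᴴ * H * J := by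
  set V := (hH.eigenvectorUnitary : Matrix n n 𝕜)
  have hVV : Vᴴ * V = 1 := Unitary.coe_star_mul_self _
  refine ⟨V.submatrix id Subtype.val, ?_, ?_⟩
  · calc _ = (Vᴴ * V).submatrix Subtype.val Subtype.val := rfl
      _ = 1 := by rw [hVV, submatrix_one _ Subtype.val_injective]
  · calc l • 1 ≤ diagonal (fun j : {j // l ≤ hH.eigenvalues j} => (hH.eigenvalues j : 𝕜)) := by
          rw [← diagonal_one, ← diagonal_smul, Matrix.le_iff, diagonal_sub,
            posSemidef_diagonal_iff]
          intro j
          simpa [RCLike.real_smul_eq_coe_mul] using j.2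
      _ = (Vᴴ * H * V).submatrix Subtype.val Subtype.val := by
          rw [conjTranspose_eigenvectorUnitary_mul_mul,
            submatrix_diagonal _ _ Subtype.val_injective]
          rfl

lemma sq_smul_one_le_conjTranspose_mul_self_mul {m n : Type*} [Finite m] [DecidableEq m] [Fintype n]
    {H : Matrix n n 𝕜} (hH : H.IsHermitian) {J : Matrix n m 𝕜}
    (hJ : Jᴴ * J = 1) {l : ℝ} (hl : 0 ≤ l) (h : l • (1 : Matrix m m 𝕜) ≤ Jᴴ * H * J) :
    l ^ 2 • (1 : Matrix m m 𝕜) ≤ Jᴴ * (H * H) * J := by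
  classical
  have := Fintype.ofFinite m
  have hsq : 0 ≤ Jᴴ * ((H - l • 1) * (H - l • 1)) * J := by
    have hself : (H - l • (1 : Matrix n n 𝕜))ᴴ = H - l • 1 := by simp [hH.eq]
    nth_rw 1 [← hself]
    exact conjTranspose_mul_mul_nonneg (posSemidef_conjTranspose_mul_self _).nonneg J
  have hexpand : Jᴴ * ((H - l • 1) * (H - l • 1)) * J =
      Jᴴ * (H * H) * J - (2 * l) • (Jᴴ * H * J) + l ^ 2 • 1 := by
    simp only [Matrix.mul_sub, Matrix.sub_mul, Matrix.smul_mul, Matrix.mul_smul, Matrix.one_mul,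
      Matrix.mul_one, hJ]
    module
  rw [hexpand] at hsq
  calc l ^ 2 • (1 : Matrix m m 𝕜) = (2 * l) • (l • 1) - l ^ 2 • 1 := by module
    _ ≤ (2 * l) • (Jᴴ * H * J) - l ^ 2 • 1 := by gcongr
    _ ≤ Jᴴ * (H * H) * J := by
      rw [← sub_nonneg]
      convert hsq using 1
      abel

lemma eigenvalues_le_of_card_le (hP : P.IsHermitian) (hQ : Q.IsHermitian) {i : n}
    (h : Fintype.card {j // hP.eigenvalues i ≤ hP.eigenvalues j} ≤
      Fintype.card {j // hP.eigenvalues i ≤ hQ.eigenvalues j}) :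
    hP.eigenvalues i ≤ hQ.eigenvalues i := by
  by_contra! hlt
  rw [Fintype.card_subtype, Fintype.card_subtype] at h
  refine h.not_gt (Finset.card_lt_card (Finset.ssubset_iff_of_subset ?_ |>.2 ⟨i, ?_, ?_⟩))
  · intro j hj
    simp only [Finset.mem_filter_univ] at hj ⊢
    by_contra! hji
    have hrank := hP.eigenvalues₀_antitone.reflect_lt hji
    exact ((hj.trans (hQ.eigenvalues₀_antitone hrank.le)).trans_lt hlt).false
  · simp
  · simpa using hlt

theorem exists_unitary_le_of_eigenvalues_le (hP : P.IsHermitian) (hQ : Q.IsHermitian)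
    (h : ∀ i, hP.eigenvalues i ≤ hQ.eigenvalues i) :
    ∃ U ∈ unitaryGroup n 𝕜, P ≤ U * Q * Uᴴ := by
  set V := (hP.eigenvectorUnitary : Matrix n n 𝕜)
  set W := (hQ.eigenvectorUnitary : Matrix n n 𝕜)
  have hV : V * Vᴴ = 1 := Unitary.coe_mul_star_self _
  have hle : Vᴴ * P * V ≤ Wᴴ * Q * W := by
    rw [conjTranspose_eigenvectorUnitary_mul_mul, conjTranspose_eigenvectorUnitary_mul_mul,
      Matrix.le_iff, diagonal_sub, posSemidef_diagonal_iff]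
    intro i
    exact sub_nonneg.2 (RCLike.ofReal_le_ofReal.2 (h i))
  refine ⟨V * Wᴴ, (hP.eigenvectorUnitary * star hQ.eigenvectorUnitary).2, ?_⟩
  calc P = V * Vᴴ * P * (V * Vᴴ) := by rw [hV, Matrix.one_mul, Matrix.mul_one]
    _ = Vᴴᴴ * (Vᴴ * P * V) * Vᴴ := by
      simp only [conjTranspose_conjTranspose, Matrix.mul_assoc]
    _ ≤ Vᴴᴴ * (Wᴴ * Q * W) * Vᴴ := conjTranspose_mul_mul_mono hle Vᴴ
    _ = V * Wᴴ * Q * (V * Wᴴ)ᴴ := by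
      simp only [conjTranspose_mul, conjTranspose_conjTranspose, Matrix.mul_assoc]

end Eigenvalues

section Young

variable {a n : Type*} [Fintype a] [Fintype n] [DecidableEq n] {p q : ℝ}

theorem matrix_young_loewner_general (hpq : p.HolderConjugate q) (X : Matrix a n ℂ)
    (Y : Matrix n n ℂ) :
    ∃ U ∈ unitaryGroup n ℂ, ((X * Yᴴ)ᴴ * (X * Yᴴ)) ^ (1 / 2 : ℝ) ≤
      U * (p⁻¹ • (Xᴴ * X) ^ (p / 2) + q⁻¹ • (Yᴴ * Y) ^ (q / 2)) * Uᴴ := by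
  set G := (X * Yᴴ)ᴴ * (X * Yᴴ)
  have hG : 0 ≤ G := (posSemidef_conjTranspose_mul_self _).nonneg
  have hp := hpq.pos
  have hq := hpq.symm.pos
  have hsqrt : (G ^ (1 / 2 : ℝ)).IsHermitian := (CFC.rpow_nonneg (a := G)).posSemidef.isHermitian
  have hmean : (p⁻¹ • (Xᴴ * X) ^ (p / 2) + q⁻¹ • (Yᴴ * Y) ^ (q / 2)).PosSemidef :=
    (add_nonneg (smul_nonneg (by positivity) CFC.rpow_nonneg)
      (smul_nonneg (by positivity) CFC.rpow_nonneg)).posSemidef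
  refine exists_unitary_le_of_eigenvalues_le hsqrt hmean.isHermitian fun i => ?_
  rcases le_or_gt (hsqrt.eigenvalues i) 0 with hi | hi
  · exact hi.trans (hmean.eigenvalues_nonneg i)
  obtain ⟨J, hJ, hJle⟩ := exists_isometry_smul_one_le hsqrt (hsqrt.eigenvalues i)
  have hJsq := sq_smul_one_le_conjTranspose_mul_self_mul hsqrt hJ hi.le hJle
  have hself : G ^ (1 / 2 : ℝ) * G ^ (1 / 2 : ℝ) = G := by
    rw [← CFC.sqrt_eq_rpow, CFC.sqrt_mul_sqrt_self G]
  rw [hself] at hJsq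
  obtain ⟨S, hS, hSle⟩ := exists_isometry_smul_one_le_young_gram hpq hJ hi hJsq
  exact eigenvalues_le_of_card_le hsqrt hmean.isHermitian
    (card_le_card_le_eigenvalues hmean.isHermitian hS hSle)

variable {k : ℕ} {A : Matrix (Fin k) (Fin k) ℂ}

lemma matRpow_eq_rpow (hA : 0 ≤ A) (r : ℝ) : matRpow A r = A ^ r := by
  rw [matRpow, dif_pos hA.posSemidef.isHermitian, ← Matrix.IsHermitian.cfc_eq,
    CFC.rpow_eq_cfc_real hA]

lemma matAbs_eq_rpow (Z : Matrix (Fin k) (Fin k) ℂ) : matAbs Z = (Zᴴ * Z) ^ (1 / 2 : ℝ) := by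
  have hZ := posSemidef_conjTranspose_mul_self Z
  have hcfc : matAbs Z = hZ.isHermitian.cfc Real.sqrt := rfl
  rw [hcfc, ← Matrix.IsHermitian.cfc_eq, CFC.rpow_eq_cfc_real hZ.nonneg]
  exact cfc_congr fun t _ => Real.sqrt_eq_rpow t

lemma matRpow_matAbs (Z : Matrix (Fin k) (Fin k) ℂ) {r : ℝ} (hr : 0 ≤ r) :
    matRpow (matAbs Z) r = (Zᴴ * Z) ^ (r / 2) := by
  have hZ : 0 ≤ Zᴴ * Z := (posSemidef_conjTranspose_mul_self Z).nonneg
  rw [matAbs_eq_rpow, matRpow_eq_rpow CFC.rpow_nonneg,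
    CFC.rpow_rpow_of_exponent_nonneg _ _ _ (by norm_num) hr, one_div_mul_eq_div]

end Young

end LoewnerOrder

/-- **Young's inequality in singular values (matrix form, up to a unitary).** -/
theorem matrix_young_loewner {n : ℕ} (p q : ℝ) (hp : 0 < p) (hq : 0 < q)
    (hpq : 1 / p + 1 / q = 1) (X Y : Matrix (Fin n) (Fin n) ℂ) :
    ∃ U : Matrix (Fin n) (Fin n) ℂ, Uᴴ * U = 1 ∧
      (U * ((p⁻¹ : ℂ) • matRpow (matAbs X) p + (q⁻¹ : ℂ) • matRpow (matAbs Y) q) * Uᴴ -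
          matAbs (X * Yᴴ)).PosSemidef := by
  have hconj : p.HolderConjugate q := Real.holderTriple_iff _ _ _ |>.2 ⟨by simpa using hpq, hp, hq⟩
  obtain ⟨U, hU, hle⟩ := matrix_young_loewner_general hconj X Y
  refine ⟨U, mem_unitaryGroup_iff'.1 hU, ?_⟩
  rw [matRpow_matAbs X hp.le, matRpow_matAbs Y hq.le, matAbs_eq_rpow, ← Complex.ofReal_inv,
    ← Complex.ofReal_inv, Complex.coe_smul, Complex.coe_smul]
  exact Matrix.le_iff.1 hle
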